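/- Let p be a prime and ℓ = 1, i.e. consider sequences over the field Z_p. Let f be a nonzero nilpotent periodic sequence in Z_p of nilpotency index η with generating vector (e_0, …, e_{η−1}). Then the leading component of f is e_{η−1}, and for every s ≥ 0 the period of Σ^s f equals the period of Σ^{s+η−1}[e_{η−1}]. -/

import Mathlib

/-- The shift operator `θ`: `θ f n = f (n+1)`. -/
def shiftSeq {M : ℕ} (f : ℕ → ZMod M) : ℕ → ZMod M := fun n => f (n + 1)

/-- The difference operator `Δ = θ - id`: `Δ f n = f (n+1) - f n`. -/
def deltaSeq {M : ℕ} (f : ℕ → ZMod M) : ℕ → ZMod M := fun n => f (n + 1) - f n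

/-- A sequence is periodic if `θ^j f = f` for some `j ≥ 1`. -/
def IsPeriodicSeq {M : ℕ} (f : ℕ → ZMod M) : Prop := ∃ j, 1 ≤ j ∧ Function.Periodic f j

/-- The period `τ(f)`: the least `j ≥ 1` with `θ^j f = f`. -/
noncomputable def perSeq {M : ℕ} (f : ℕ → ZMod M) : ℕ :=
  sInf {j | 1 ≤ j ∧ Function.Periodic f j}

/-- The trace `tr f = ∑_{i=0}^{τ(f)-1} f i`. -/
noncomputable def trSeq {M : ℕ} (f : ℕ → ZMod M) : ZMod M :=
  ∑ i ∈ Finset.range (perSeq f), f i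

/-- The sum operator `Σ`: `Σf(0) = 0`, `Σf(n) = f(n-1) + Σf(n-1)`. -/
def sigmaSeq {M : ℕ} (f : ℕ → ZMod M) : ℕ → ZMod M
  | 0 => 0
  | n + 1 => f n + sigmaSeq f n

/-- A sequence is nilpotent if `Δ^η f = 0` for some `η ≥ 1`. -/
def IsNilpotentSeq {M : ℕ} (f : ℕ → ZMod M) : Prop := ∃ η, 1 ≤ η ∧ deltaSeq^[η] f = 0

/-- A sequence is idempotent if `Δ^η f = f` for some `η ≥ 1`. -/
def IsIdempotentSeq {M : ℕ} (f : ℕ → ZMod M) : Prop := ∃ η, 1 ≤ η ∧ deltaSeq^[η] f = f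

/-- The nilpotency index: the least `η ≥ 1` with `Δ^η f = 0`. -/
noncomputable def nilIndex {M : ℕ} (f : ℕ → ZMod M) : ℕ :=
  sInf {η | 1 ≤ η ∧ deltaSeq^[η] f = 0}

/-- The idempotency index: the least `η ≥ 1` with `Δ^η f = f`. -/
noncomputable def idemIndex {M : ℕ} (f : ℕ → ZMod M) : ℕ :=
  sInf {η | 1 ≤ η ∧ deltaSeq^[η] f = f}

/-- The `p`-adic valuation on `ZMod M`, with `ν(0) = ∞`. -/
noncomputable def nuVal (p : ℕ) {M : ℕ} (a : ZMod M) : ℕ∞ :=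
  if a = 0 then ⊤ else (padicValNat p a.val : ℕ∞)

/-- `Double(f, q^t)`: repeat `q` times each successive `q^t`-subsequence of `f`. -/
def DoubleSeq {M : ℕ} (f : ℕ → ZMod M) (q t : ℕ) : ℕ → ZMod M :=
  fun n => f ((n / q ^ (t + 1)) * q ^ t + n % q ^ t)

/-- `Alt(f, q^t)`: alternate `(q-1)q^t` zeros with the successive `q^t`-subsequences of `f`. -/
def AltSeq {M : ℕ} (f : ℕ → ZMod M) (q t : ℕ) : ℕ → ZMod M :=
  fun n => if (n / q ^ t) % q = q - 1 then f ((n / q ^ (t + 1)) * q ^ t + n % q ^ t) else 0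

/-- The binomial sequence `bin_s(n) = C(n,s) mod p^ℓ`. -/
def binSeq (p l : ℕ) (s : ℕ) : ℕ → ZMod (p ^ l) := fun n => (n.choose s : ZMod (p ^ l))

/-- `f ≡_ν g`: zeros coincide, and valuations of nonzero values coincide. -/
def nuEquiv (p : ℕ) {M : ℕ} (f g : ℕ → ZMod M) : Prop :=
  ∀ n, (f n = 0 ↔ g n = 0) ∧ (f n ≠ 0 → padicValNat p (f n).val = padicValNat p (g n).val)

/-- `Π_i(f)`: number of entries of valuation `i` in one period of `f`. -/
noncomputable def PiCount (p : ℕ) {M : ℕ} (i : ℕ) (f : ℕ → ZMod M) : ℕ :=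
  ((Finset.range (perSeq f)).filter fun x => f x ≠ 0 ∧ padicValNat p (f x).val = i).card

/-- `Z(f)`: number of zero entries in one period of `f`. -/
noncomputable def ZCount {M : ℕ} (f : ℕ → ZMod M) : ℕ :=
  ((Finset.range (perSeq f)).filter fun x => f x = 0).card

/-- The `j`-th base-`p` digit of `x`. -/
def dig (p x j : ℕ) : ℕ := x / p ^ j % p

/-!
In characteristic `p` the binomial theorem gives `θ ^ p ^ k = (1 + Δ) ^ p ^ k = 1 + Δ ^ p ^ k`, so
`p ^ k` is a period of `f` exactly when `Δ ^ p ^ k` kills `f`. Hence the period of a nilpotent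
sequence of index `η` is the least power of `p` that is at least `η`, and depends on `η` alone.
Since `Δ` inverts `Σ` on the left, `Σ ^ s` raises the nilpotency index of a nonzero sequence by
exactly `s`; thus `Σ ^ s f` and `Σ ^ (s + η - 1) [e]` both have index `η + s` when `e ≠ 0`.
-/

open fwdDiff_aux in
theorem apply_add_prime_pow_nsmul {M G : Type*} [AddCommMonoid M] [AddCommGroup G] {p : ℕ}
    [Fact p.Prime] [Module (ZMod p) G] (h : M) (f : M → G) (k : ℕ) (y : M) :
    f (y + p ^ k • h) = f y + (fwdDiff h)^[p ^ k] f y := by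
  obtain ⟨r, hr⟩ :=
    (Commute.one_right (fwdDiffₗ M G h)).exists_add_pow_prime_pow_eq (Fact.out : p.Prime) k
  calc f (y + p ^ k • h) = ((fwdDiffₗ M G h + 1) ^ p ^ k) f y :=
        (shiftₗ_pow_apply h f (p ^ k) y).symm
    _ = (fwdDiffₗ M G h ^ p ^ k + 1 ^ p ^ k + p * (fwdDiffₗ M G h * 1 * r)) f y := by
        rw [hr]; simp only [mul_assoc]
    _ = f y + (fwdDiff h)^[p ^ k] f y := by
        simp [coe_fwdDiffₗ_pow, ZModModule.char_nsmul_eq_zero, add_comm]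

section Period

variable {M : ℕ} {f : ℕ → ZMod M}

lemma shiftSeq_iterate_apply (f : ℕ → ZMod M) (j n : ℕ) : shiftSeq^[j] f n = f (n + j) := by
  induction j generalizing n with
  | zero => rfl
  | succ j ih => rw [Function.iterate_succ_apply', shiftSeq, ih, add_right_comm, add_assoc]

lemma periodic_iff_isPeriodicPt_shiftSeq {j : ℕ} :
    Function.Periodic f j ↔ Function.IsPeriodicPt shiftSeq j f := by
  simp only [Function.IsPeriodicPt, Function.IsFixedPt, funext_iff, shiftSeq_iterate_apply,
    Function.Periodic]

lemma perSeq_eq_minimalPeriod (f : ℕ → ZMod M) : perSeq f = Function.minimalPeriod shiftSeq f := by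
  simp only [perSeq, Function.minimalPeriod_eq_sInf_n_pos_IsPeriodicPt,
    periodic_iff_isPeriodicPt_shiftSeq, Nat.one_le_iff_ne_zero, pos_iff_ne_zero]

-- If `f` is aperiodic then `perSeq f = sInf ∅ = 0`, and both sides say `j = 0`.
lemma perSeq_dvd_iff_periodic {j : ℕ} : perSeq f ∣ j ↔ Function.Periodic f j := by
  rw [perSeq_eq_minimalPeriod, periodic_iff_isPeriodicPt_shiftSeq,
    Function.isPeriodicPt_iff_minimalPeriod_dvd]

end Period

section NilpotencyIndex

variable {M : ℕ} {f : ℕ → ZMod M}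

lemma deltaSeq_eq_fwdDiff : deltaSeq (M := M) = fwdDiff 1 := rfl

lemma deltaSeq_const (c : ZMod M) : deltaSeq (fun _ => c) = 0 :=
  fwdDiff_const 1 c

lemma deltaSeq_eq_zero_iff : deltaSeq f = 0 ↔ f = fun _ => f 0 := by
  refine ⟨fun h => funext fun n => ?_, fun h => ?_⟩
  · induction n with
    | zero => rfl
    | succ n ih => exact (sub_eq_zero.mp (congrFun h n)).trans ih
  · rw [h, deltaSeq_const]

lemma deltaSeq_iterate_eq_zero_of_le {a b : ℕ} (hab : a ≤ b) (h : deltaSeq^[a] f = 0) :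
    deltaSeq^[b] f = 0 := by
  have hzero : Function.IsFixedPt deltaSeq (0 : ℕ → ZMod M) := deltaSeq_const 0
  obtain ⟨c, rfl⟩ := Nat.exists_eq_add_of_le' hab
  rw [Function.iterate_add_apply, h, hzero.iterate c]

lemma nilIndex_spec (hf : IsNilpotentSeq f) : 1 ≤ nilIndex f ∧ deltaSeq^[nilIndex f] f = 0 :=
  Nat.sInf_mem hf

lemma deltaSeq_iterate_eq_zero_iff_nilIndex_le (hf : IsNilpotentSeq f) {k : ℕ} (hk : 1 ≤ k) :
    deltaSeq^[k] f = 0 ↔ nilIndex f ≤ k :=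
  ⟨fun h => Nat.sInf_le ⟨hk, h⟩, fun h => deltaSeq_iterate_eq_zero_of_le h (nilIndex_spec hf).2⟩

lemma deltaSeq_iterate_nilIndex_sub_one_ne_zero (hf : IsNilpotentSeq f) (hf0 : f ≠ 0) :
    deltaSeq^[nilIndex f - 1] f ≠ 0 := by
  intro h
  have hpos := (nilIndex_spec hf).1
  rcases hpos.eq_or_lt with hone | hlt
  · exact hf0 (by simpa [← hone] using h)
  · have := (deltaSeq_iterate_eq_zero_iff_nilIndex_le hf (Nat.le_sub_one_of_lt hlt)).mp h
    lia

theorem deltaSeq_iterate_nilIndex_sub_one_apply_zero_ne_zero (hf : IsNilpotentSeq f) (hf0 : f ≠ 0) :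
    deltaSeq^[nilIndex f - 1] f 0 ≠ 0 := by
  obtain ⟨hpos, hnil⟩ := nilIndex_spec hf
  have hconst : deltaSeq (deltaSeq^[nilIndex f - 1] f) = 0 := by
    rwa [← Function.iterate_succ_apply' deltaSeq, Nat.succ_eq_add_one, Nat.sub_add_cancel hpos]
  intro h
  apply deltaSeq_iterate_nilIndex_sub_one_ne_zero hf hf0
  rw [deltaSeq_eq_zero_iff.mp hconst, h]
  rfl

lemma nilIndex_eq_succ {m : ℕ} (h : deltaSeq^[m + 1] f = 0) (h' : deltaSeq^[m] f ≠ 0) :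
    nilIndex f = m + 1 :=
  IsLeast.csInf_eq ⟨⟨m.succ_pos, h⟩, fun _ hk =>
    not_le.mp fun hle => h' (deltaSeq_iterate_eq_zero_of_le hle hk.2)⟩

lemma isNilpotentSeq_const (c : ZMod M) : IsNilpotentSeq fun _ => c :=
  ⟨1, le_rfl, deltaSeq_const c⟩

lemma nilIndex_const {c : ZMod M} (hc : c ≠ 0) : nilIndex (fun _ => c) = 1 :=
  nilIndex_eq_succ (m := 0) (deltaSeq_const c) fun h => hc (congrFun h 0)

lemma leftInverse_deltaSeq_sigmaSeq : Function.LeftInverse (deltaSeq (M := M)) sigmaSeq :=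
  fun _ => funext fun _ => add_sub_cancel_right _ _

lemma deltaSeq_iterate_add_sigmaSeq_iterate (f : ℕ → ZMod M) (k s : ℕ) :
    deltaSeq^[k + s] (sigmaSeq^[s] f) = deltaSeq^[k] f := by
  rw [Function.iterate_add_apply, leftInverse_deltaSeq_sigmaSeq.iterate s f]

lemma IsNilpotentSeq.sigmaSeq_iterate (hf : IsNilpotentSeq f) (s : ℕ) :
    IsNilpotentSeq (sigmaSeq^[s] f) := by
  obtain ⟨k, hk, hnil⟩ := hf
  exact ⟨k + s, le_add_right hk, by rw [deltaSeq_iterate_add_sigmaSeq_iterate, hnil]⟩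

theorem nilIndex_sigmaSeq_iterate (hf : IsNilpotentSeq f) (hf0 : f ≠ 0) (s : ℕ) :
    nilIndex (sigmaSeq^[s] f) = nilIndex f + s := by
  obtain ⟨hpos, hnil⟩ := nilIndex_spec hf
  have hlast := deltaSeq_iterate_nilIndex_sub_one_ne_zero hf hf0
  rw [show nilIndex f + s = nilIndex f - 1 + s + 1 by lia]
  apply nilIndex_eq_succ
  · rw [show nilIndex f - 1 + s + 1 = nilIndex f + s by lia,
      deltaSeq_iterate_add_sigmaSeq_iterate, hnil]
  · rwa [deltaSeq_iterate_add_sigmaSeq_iterate]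

end NilpotencyIndex

section Prime

variable {p : ℕ} [Fact p.Prime] {f : ℕ → ZMod p}

lemma nuVal_eq_zero {a : ZMod p} (ha : a ≠ 0) : nuVal p a = 0 := by
  have hdvd : ¬p ∣ a.val := Nat.not_dvd_of_pos_of_lt (ZMod.val_pos.mpr ha) a.val_lt
  rw [nuVal, if_neg ha, padicValNat.eq_zero_of_not_dvd hdvd, Nat.cast_zero]

lemma periodic_prime_pow_iff {k : ℕ} : Function.Periodic f (p ^ k) ↔ deltaSeq^[p ^ k] f = 0 := by
  have hshift (n : ℕ) : f (n + p ^ k) = f n + deltaSeq^[p ^ k] f n := by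
    simpa only [deltaSeq_eq_fwdDiff, nsmul_one, Nat.cast_id] using
      apply_add_prime_pow_nsmul (p := p) 1 f k n
  simp only [Function.Periodic, hshift, add_eq_left, funext_iff, Pi.zero_apply]

lemma perSeq_dvd_prime_pow_iff (hf : IsNilpotentSeq f) {k : ℕ} :
    perSeq f ∣ p ^ k ↔ Nat.clog p (nilIndex f) ≤ k := by
  have hp : p.Prime := Fact.out
  rw [perSeq_dvd_iff_periodic, periodic_prime_pow_iff,
    deltaSeq_iterate_eq_zero_iff_nilIndex_le hf (Nat.one_le_pow _ _ hp.pos),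
    Nat.clog_le_iff_le_pow hp.one_lt]

theorem perSeq_eq_pow_clog_nilIndex (hf : IsNilpotentSeq f) :
    perSeq f = p ^ Nat.clog p (nilIndex f) := by
  obtain ⟨j, hj, hper⟩ :=
    (Nat.dvd_prime_pow Fact.out).mp ((perSeq_dvd_prime_pow_iff hf).mpr le_rfl)
  have hle : Nat.clog p (nilIndex f) ≤ j := (perSeq_dvd_prime_pow_iff hf).mp hper.dvd
  rw [hper, hj.antisymm hle]

theorem perSeq_sigmaSeq_iterate (hf : IsNilpotentSeq f) (hf0 : f ≠ 0) (s : ℕ) :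
    perSeq (sigmaSeq^[s] f) = p ^ Nat.clog p (nilIndex f + s) := by
  rw [perSeq_eq_pow_clog_nilIndex (hf.sigmaSeq_iterate s), nilIndex_sigmaSeq_iterate hf hf0]

end Prime

/-- over `Z_p`, the leading component of a nonzero nilpotent sequence of
index `η` is `e_{η-1}` (it is nonzero), and `τ(Σ^s f) = τ(Σ^{s+η-1}[e_{η-1}])` for every
`s ≥ 0`. -/
theorem stmt13 (p : ℕ) (hp : p.Prime)
    (f : ℕ → ZMod p) (hf : IsPeriodicSeq f) (hf0 : f ≠ 0)
    (η : ℕ) (hη : 1 ≤ η) (hnil : deltaSeq^[η] f = 0)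
    (hmin : ∀ k, 1 ≤ k → deltaSeq^[k] f = 0 → η ≤ k) :
    deltaSeq^[η - 1] f 0 ≠ 0 ∧
    (∀ i < η, nuVal p (deltaSeq^[η - 1] f 0) ≤ nuVal p (deltaSeq^[i] f 0)) ∧
    ∀ s : ℕ, perSeq (sigmaSeq^[s] f)
      = perSeq (sigmaSeq^[s + (η - 1)] (fun _ => deltaSeq^[η - 1] f 0)) := by
  have := Fact.mk hp
  have hfnil : IsNilpotentSeq f := ⟨η, hη, hnil⟩
  have hindex : nilIndex f = η :=
    IsLeast.csInf_eq ⟨⟨hη, hnil⟩, fun k hk => hmin k hk.1 hk.2⟩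
  have hlead : deltaSeq^[η - 1] f 0 ≠ 0 :=
    hindex ▸ deltaSeq_iterate_nilIndex_sub_one_apply_zero_ne_zero hfnil hf0
  refine ⟨hlead, fun i _ => (nuVal_eq_zero hlead).trans_le zero_le, fun s => ?_⟩
  have hconst : (fun _ : ℕ => deltaSeq^[η - 1] f 0) ≠ 0 := fun h => hlead (congrFun h 0)
  rw [perSeq_sigmaSeq_iterate hfnil hf0, perSeq_sigmaSeq_iterate (isNilpotentSeq_const _) hconst,
    hindex, nilIndex_const hlead, show 1 + (s + (η - 1)) = η + s by lia]
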